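/- arXiv:1403.2852 — 3 statements merged into one kernel-verified Lean document; each statement's English description precedes it below -/
import Mathlib

section
/- Let T>0 and let X be a weak solution of the dyadic model with initial condition x ∈ H. If X ∈ L³([0,T]; W^{β/3,3}), i.e. ∫_0^T ∑_{n≥1} 2^{βn} |X_n(t)|³ dt < ∞, then X satisfies the energy equality on [0,T]: for every t ∈ [0,T], ∑_{n≥1} X_n(t)² + ∫_0^t ∑_{n≥1} (2k_n/g_n) X_n(s)² ds = ∑_{n≥1} x_n². -/
open scoped BigOperators ENNReal
open MeasureTheory Filter Set Topology

/-- `kₙ = 2^{βn}`. -/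
noncomputable def kk (β : ℝ) (n : ℕ) : ℝ := (2 : ℝ) ^ (β * n)

/-- A weak solution of the dyadic model: `X 0 ≡ 0`, `X n 0 = x n`, and the ODE holds
for every `n ≥ 1` and `t ≥ 0` (the derivative being taken within `[0,∞)`). -/
def IsDyadicSolution (β : ℝ) (φ g : ℕ → ℝ) (x : ℕ → ℝ) (X : ℕ → ℝ → ℝ) : Prop :=
  (∀ t : ℝ, X 0 t = 0) ∧
  (∀ n : ℕ, 1 ≤ n → X n 0 = x n) ∧
  (∀ n : ℕ, 1 ≤ n → ∀ t : ℝ, 0 ≤ t →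
    HasDerivWithinAt (X n)
      (φ (n - 1) * kk β (n - 1) * (X (n - 1) t) ^ 2
        - φ n * kk β n * X n t * X (n + 1) t
        - kk β n / g n * X n t) (Set.Ici 0) t)

/-- `X ∈ L³([0,T]; W^{β/3,3})`, i.e. `∫_0^T ∑_{n≥1} 2^{βn} |Xₙ(t)|³ dt < ∞`. -/
def MemL3W (β : ℝ) (X : ℕ → ℝ → ℝ) (T : ℝ) : Prop :=
  (∫⁻ t in Set.Ioc (0 : ℝ) T,
      ∑' n : ℕ, ENNReal.ofReal ((2 : ℝ) ^ (β * ((n : ℝ) + 1)) * |X (n + 1) t| ^ 3)) < ⊤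

/-!
Multiplying the `n`-th equation by `2 Xₙ` shows that the energy `Xₙ²` of mode `n` grows by the flux
`2 φₙ₋₁ kₙ₋₁ Xₙ₋₁² Xₙ` received from mode `n - 1` and decreases by the flux passed on to mode
`n + 1` and by viscous dissipation. Summing over `n ≤ N`, the fluxes telescope, so the energy
equality on `[0, t]` holds as soon as the time integral of the `N`-th flux tends to `0`. Since
`p² q ≤ p³ + q³` and `kₙ` is comparable to `kₙ₊₁`, that flux is dominated by the terms `N` and
`N + 1` of the cubed `W^{β/3,3}` norm, whose time integrals form a convergent series. The partial
sums are compared in `[0, ∞]`, where the initial energy may be infinite.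
-/

section PowerProducts

variable {R : Type*} [Semiring R] [LinearOrder R] [IsOrderedRing R] {a b : R}

theorem pow_mul_pow_le_pow_add_add_pow_add (ha : 0 ≤ a) (hb : 0 ≤ b) (m n : ℕ) :
    a ^ m * b ^ n ≤ a ^ (m + n) + b ^ (m + n) := by
  rcases le_total a b with hab | hba
  · calc a ^ m * b ^ n ≤ b ^ m * b ^ n := by gcongr
      _ = b ^ (m + n) := (pow_add b m n).symm
      _ ≤ a ^ (m + n) + b ^ (m + n) := le_add_of_nonneg_left (pow_nonneg ha _)
  · calc a ^ m * b ^ n ≤ a ^ m * a ^ n := by gcongr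
      _ = a ^ (m + n) := (pow_add a m n).symm
      _ ≤ a ^ (m + n) + b ^ (m + n) := le_add_of_nonneg_right (pow_nonneg hb _)

end PowerProducts

section Telescoping

variable {a b F : ℕ → ℝ}

theorem tsum_ofReal_le_of_le_add_sub_succ (ha : ∀ n, 0 ≤ a n) (hb : ∀ n, 0 ≤ b n)
    (hF : Tendsto F atTop (𝓝 (F 0))) (hab : ∀ n, a n ≤ b n + (F n - F (n + 1))) :
    ∑' n, ENNReal.ofReal (a n) ≤ ∑' n, ENNReal.ofReal (b n) := by
  have hdefect : Tendsto (fun N => ENNReal.ofReal (F 0 - F N)) atTop (𝓝 0) := by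
    simpa using ENNReal.tendsto_ofReal (hF.const_sub (F 0))
  have hlimit : Tendsto (fun N => (∑ n ∈ Finset.range N, ENNReal.ofReal (b n))
      + ENNReal.ofReal (F 0 - F N)) atTop (𝓝 (∑' n, ENNReal.ofReal (b n))) := by
    simpa using (ENNReal.tendsto_nat_tsum _).add hdefect
  refine le_of_tendsto_of_tendsto' (ENNReal.tendsto_nat_tsum _) hlimit fun N => ?_
  calc ∑ n ∈ Finset.range N, ENNReal.ofReal (a n)
      = ENNReal.ofReal (∑ n ∈ Finset.range N, a n) :=
        (ENNReal.ofReal_sum_of_nonneg fun n _ => ha n).symm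
    _ ≤ ENNReal.ofReal (∑ n ∈ Finset.range N, (b n + (F n - F (n + 1)))) :=
        ENNReal.ofReal_le_ofReal (Finset.sum_le_sum fun n _ => hab n)
    _ = ENNReal.ofReal ((∑ n ∈ Finset.range N, b n) + (F 0 - F N)) := by
        rw [Finset.sum_add_distrib, Finset.sum_range_sub']
    _ ≤ ENNReal.ofReal (∑ n ∈ Finset.range N, b n) + ENNReal.ofReal (F 0 - F N) :=
        ENNReal.ofReal_add_le
    _ = (∑ n ∈ Finset.range N, ENNReal.ofReal (b n)) + ENNReal.ofReal (F 0 - F N) := by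
        rw [ENNReal.ofReal_sum_of_nonneg fun n _ => hb n]

theorem tsum_ofReal_eq_of_eq_add_sub_succ (ha : ∀ n, 0 ≤ a n) (hb : ∀ n, 0 ≤ b n)
    (hF : Tendsto F atTop (𝓝 (F 0))) (hab : ∀ n, a n = b n + (F n - F (n + 1))) :
    ∑' n, ENNReal.ofReal (a n) = ∑' n, ENNReal.ofReal (b n) := by
  refine le_antisymm (tsum_ofReal_le_of_le_add_sub_succ ha hb hF fun n => (hab n).le)
    (tsum_ofReal_le_of_le_add_sub_succ (F := -F) hb ha hF.neg fun n => ?_)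
  simp only [hab, Pi.neg_apply]
  linarith

end Telescoping

section Integration

theorem tendsto_lintegral_zero_of_lintegral_tsum_ne_top {α : Type*} [MeasurableSpace α]
    {μ : Measure α} {f : ℕ → α → ℝ≥0∞} (hf : ∀ n, AEMeasurable (f n) μ)
    (hsum : ∫⁻ a, ∑' n, f n a ∂μ ≠ ⊤) :
    Tendsto (fun n => ∫⁻ a, f n a ∂μ) atTop (𝓝 0) := by
  rw [lintegral_tsum hf] at hsum
  exact ENNReal.tendsto_atTop_zero_of_tsum_ne_top hsum

theorem ofReal_intervalIntegral_eq_lintegral_ofReal {μ : Measure ℝ} {f : ℝ → ℝ} {a b : ℝ}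
    (hab : a ≤ b) (hf : IntervalIntegrable f μ a b) (hf_nonneg : 0 ≤ᵐ[μ.restrict (Ioc a b)] f) :
    ENNReal.ofReal (∫ s in a..b, f s ∂μ) = ∫⁻ s in Ioc a b, ENNReal.ofReal (f s) ∂μ := by
  rw [intervalIntegral.integral_of_le hab, ofReal_integral_eq_lintegral_ofReal hf.1 hf_nonneg]

end Integration

/-- The rate `2 φₙ kₙ Xₙ² Xₙ₊₁` at which the energy `∑ Xₙ²` flows from mode `n` to mode `n + 1`. -/
noncomputable def energyFlux (β : ℝ) (φ : ℕ → ℝ) (X : ℕ → ℝ → ℝ) (n : ℕ) (s : ℝ) : ℝ :=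
  2 * φ n * kk β n * X n s ^ 2 * X (n + 1) s

/-- The rate `(2 kₙ / gₙ) Xₙ²` at which mode `n` loses energy to viscosity. -/
noncomputable def dissipationRate (β : ℝ) (g : ℕ → ℝ) (X : ℕ → ℝ → ℝ) (n : ℕ) (s : ℝ) : ℝ :=
  2 * kk β n / g n * X n s ^ 2

/-- The `n`-th term `2^{βn} |Xₙ|³` of the cubed `W^{β/3,3}` norm, with values in `[0,∞]`. -/
noncomputable def cubicTerm (β : ℝ) (X : ℕ → ℝ → ℝ) (n : ℕ) (s : ℝ) : ℝ≥0∞ :=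
  ENNReal.ofReal (kk β n * |X n s| ^ 3)

section Dyadic

variable {β T t : ℝ} {φ g x : ℕ → ℝ} {X : ℕ → ℝ → ℝ}

theorem kk_pos (β : ℝ) (n : ℕ) : 0 < kk β n :=
  Real.rpow_pos_of_pos two_pos _

theorem kk_eq_rpow_neg_mul_kk_succ (β : ℝ) (n : ℕ) : kk β n = (2 : ℝ) ^ (-β) * kk β (n + 1) := by
  rw [kk, kk, ← Real.rpow_add two_pos]
  congr 1
  push_cast
  ring

theorem dissipationRate_nonneg {n : ℕ} (hg : 0 < g n) (s : ℝ) : 0 ≤ dissipationRate β g X n s := by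
  have := kk_pos β n
  unfold dissipationRate
  positivity

theorem abs_energyFlux_le {Φ : ℝ} {n : ℕ} (hφ : |φ n| ≤ Φ) (s : ℝ) :
    |energyFlux β φ X n s| ≤
      2 * Φ * (1 + 2 ^ (-β)) * (kk β n * |X n s| ^ 3 + kk β (n + 1) * |X (n + 1) s| ^ 3) := by
  have hk := kk_pos β n
  have hk' := kk_pos β (n + 1)
  have hr : (0 : ℝ) < 2 ^ (-β) := Real.rpow_pos_of_pos two_pos _
  have hΦ : 0 ≤ Φ := (abs_nonneg _).trans hφ
  have hyoung : |X n s| ^ 2 * |X (n + 1) s| ≤ |X n s| ^ 3 + |X (n + 1) s| ^ 3 := by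
    simpa only [pow_one] using
      pow_mul_pow_le_pow_add_add_pow_add (abs_nonneg (X n s)) (abs_nonneg (X (n + 1) s)) 2 1
  calc |energyFlux β φ X n s|
      = 2 * |φ n| * (kk β n * (|X n s| ^ 2 * |X (n + 1) s|)) := by
        simp only [energyFlux, abs_mul, abs_pow, abs_two, abs_of_pos hk]
        ring
    _ ≤ 2 * Φ * (kk β n * (|X n s| ^ 3 + |X (n + 1) s| ^ 3)) := by gcongr
    _ = 2 * Φ * (1 * (kk β n * |X n s| ^ 3)
          + 2 ^ (-β) * (kk β (n + 1) * |X (n + 1) s| ^ 3)) := by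
        rw [mul_add, one_mul, ← mul_assoc (2 ^ (-β)), ← kk_eq_rpow_neg_mul_kk_succ]
    _ ≤ 2 * Φ * ((1 + 2 ^ (-β)) * (kk β n * |X n s| ^ 3)
          + (1 + 2 ^ (-β)) * (kk β (n + 1) * |X (n + 1) s| ^ 3)) := by
        gcongr
        · exact le_add_of_nonneg_right hr.le
        · exact le_add_of_nonneg_left zero_le_one
    _ = 2 * Φ * (1 + 2 ^ (-β))
          * (kk β n * |X n s| ^ 3 + kk β (n + 1) * |X (n + 1) s| ^ 3) := by ring

theorem enorm_energyFlux_le {Φ : ℝ} {n : ℕ} (hφ : |φ n| ≤ Φ) (s : ℝ) :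
    ‖energyFlux β φ X n s‖ₑ ≤
      ENNReal.ofReal (2 * Φ * (1 + 2 ^ (-β))) * (cubicTerm β X n s + cubicTerm β X (n + 1) s) := by
  have hk := kk_pos β n
  have hk' := kk_pos β (n + 1)
  have hΦ : 0 ≤ Φ := (abs_nonneg _).trans hφ
  rw [Real.enorm_eq_ofReal_abs, cubicTerm, cubicTerm,
    ← ENNReal.ofReal_add (by positivity) (by positivity), ← ENNReal.ofReal_mul (by positivity)]
  exact ENNReal.ofReal_le_ofReal (abs_energyFlux_le hφ s)

theorem aemeasurable_cubicTerm {μ : Measure ℝ} {n : ℕ} (hX : AEMeasurable (X n) μ) :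
    AEMeasurable (cubicTerm β X n) μ := by
  unfold cubicTerm
  fun_prop

namespace MemL3W

theorem tendsto_lintegral_cubicTerm (hL3 : MemL3W β X T)
    (hX : ∀ n, AEMeasurable (X n) (volume.restrict (Ioc 0 T))) :
    Tendsto (fun n => ∫⁻ s in Ioc 0 T, cubicTerm β X n s) atTop (𝓝 0) := by
  rw [← tendsto_add_atTop_iff_nat 1]
  refine tendsto_lintegral_zero_of_lintegral_tsum_ne_top
    (fun n => aemeasurable_cubicTerm (hX (n + 1))) ?_
  simpa only [MemL3W, cubicTerm, kk, Nat.cast_add_one] using hL3.ne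

theorem tendsto_integral_energyFlux (hL3 : MemL3W β X T)
    (hX : ∀ n, AEMeasurable (X n) (volume.restrict (Ioc 0 T)))
    (hφ : ∃ Φ : ℝ, ∀ n, |φ n| ≤ Φ) (ht : t ∈ Icc 0 T) :
    Tendsto (fun n => ∫ s in (0 : ℝ)..t, energyFlux β φ X n s) atTop (𝓝 0) := by
  obtain ⟨Φ, hΦ⟩ := hφ
  set C := ENNReal.ofReal (2 * Φ * (1 + 2 ^ (-β)))
  have hcubic := hL3.tendsto_lintegral_cubicTerm hX
  have hmajorant : Tendsto (fun n => C * ((∫⁻ s in Ioc 0 T, cubicTerm β X n s)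
      + ∫⁻ s in Ioc 0 T, cubicTerm β X (n + 1) s)) atTop (𝓝 0) := by
    simpa using ENNReal.Tendsto.const_mul (a := C)
      (hcubic.add ((tendsto_add_atTop_iff_nat 1).2 hcubic)) (.inr ENNReal.ofReal_ne_top)
  rw [tendsto_zero_iff_enorm_tendsto_zero]
  refine tendsto_of_tendsto_of_tendsto_of_le_of_le tendsto_const_nhds hmajorant
    (fun _ => zero_le) fun n => ?_
  calc ‖∫ s in (0 : ℝ)..t, energyFlux β φ X n s‖ₑ
      ≤ ∫⁻ s in Ioc 0 t, ‖energyFlux β φ X n s‖ₑ := by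
        rw [intervalIntegral.integral_of_le ht.1]
        exact enorm_integral_le_lintegral_enorm _
    _ ≤ ∫⁻ s in Ioc 0 T, ‖energyFlux β φ X n s‖ₑ :=
        lintegral_mono_set (Ioc_subset_Ioc_right ht.2)
    _ ≤ ∫⁻ s in Ioc 0 T, C * (cubicTerm β X n s + cubicTerm β X (n + 1) s) :=
        lintegral_mono fun s => enorm_energyFlux_le (hΦ n) s
    _ = C * ((∫⁻ s in Ioc 0 T, cubicTerm β X n s) + ∫⁻ s in Ioc 0 T, cubicTerm β X (n + 1) s) := by
        rw [lintegral_const_mul' _ _ ENNReal.ofReal_ne_top,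
          lintegral_add_left' (aemeasurable_cubicTerm (hX n))]

end MemL3W

namespace IsDyadicSolution

theorem continuousOn (h : IsDyadicSolution β φ g x X) (n : ℕ) : ContinuousOn (X n) (Ici 0) := by
  cases n with
  | zero => exact continuousOn_const.congr fun t _ => h.1 t
  | succ n => exact fun t ht => (h.2.2 (n + 1) n.succ_pos t ht).continuousWithinAt

theorem aemeasurable_Ioc (h : IsDyadicSolution β φ g x X) (n : ℕ) (T : ℝ) :
    AEMeasurable (X n) (volume.restrict (Ioc 0 T)) :=
  ((h.continuousOn n).mono fun _ hs => hs.1.le).aemeasurable measurableSet_Ioc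

theorem intervalIntegrable_energyFlux (h : IsDyadicSolution β φ g x X) (n : ℕ) (ht : 0 ≤ t) :
    IntervalIntegrable (energyFlux β φ X n) volume 0 t := by
  have hflux : ContinuousOn (energyFlux β φ X n) (Ici 0) :=
    (continuousOn_const.mul ((h.continuousOn n).pow 2)).mul (h.continuousOn (n + 1))
  exact (hflux.mono Icc_subset_Ici_self).intervalIntegrable_of_Icc ht

theorem intervalIntegrable_dissipationRate (h : IsDyadicSolution β φ g x X) (n : ℕ)
    (ht : 0 ≤ t) : IntervalIntegrable (dissipationRate β g X n) volume 0 t := by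
  have hdiss : ContinuousOn (dissipationRate β g X n) (Ici 0) :=
    continuousOn_const.mul ((h.continuousOn n).pow 2)
  exact (hdiss.mono Icc_subset_Ici_self).intervalIntegrable_of_Icc ht

theorem hasDerivWithinAt_sq (h : IsDyadicSolution β φ g x X) (n : ℕ) (ht : 0 ≤ t) :
    HasDerivWithinAt (fun s => X (n + 1) s ^ 2)
      (energyFlux β φ X n t - energyFlux β φ X (n + 1) t - dissipationRate β g X (n + 1) t)
      (Ici 0) t := by
  obtain ⟨-, -, hode⟩ := h
  refine ((hode (n + 1) n.succ_pos t ht).pow 2).congr_deriv ?_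
  simp only [energyFlux, dissipationRate, Nat.add_sub_cancel]
  ring

theorem sq_add_integral_dissipationRate (h : IsDyadicSolution β φ g x X) (n : ℕ) (ht : 0 ≤ t) :
    X (n + 1) t ^ 2 + ∫ s in (0 : ℝ)..t, dissipationRate β g X (n + 1) s =
      x (n + 1) ^ 2 + ((∫ s in (0 : ℝ)..t, energyFlux β φ X n s)
        - ∫ s in (0 : ℝ)..t, energyFlux β φ X (n + 1) s) := by
  have hflux (m : ℕ) := h.intervalIntegrable_energyFlux m ht
  have hdiss := h.intervalIntegrable_dissipationRate (n + 1) ht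
  have hinit : X (n + 1) 0 = x (n + 1) := h.2.1 (n + 1) n.succ_pos
  have hftc := intervalIntegral.integral_eq_sub_of_hasDerivAt_of_le
    (f := fun s => X (n + 1) s ^ 2) ht (((h.continuousOn (n + 1)).pow 2).mono Icc_subset_Ici_self)
    (fun s hs => (h.hasDerivWithinAt_sq n hs.1.le).hasDerivAt (Ici_mem_nhds hs.1))
    (((hflux n).sub (hflux (n + 1))).sub hdiss)
  rw [intervalIntegral.integral_sub ((hflux n).sub (hflux (n + 1))) hdiss,
    intervalIntegral.integral_sub (hflux n) (hflux (n + 1)), hinit] at hftc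
  linarith

theorem energy_equality_of_tendsto_integral_energyFlux (h : IsDyadicSolution β φ g x X)
    (hg : ∀ n, 1 ≤ n → 0 < g n) (ht : 0 ≤ t)
    (hflux : Tendsto (fun n => ∫ s in (0 : ℝ)..t, energyFlux β φ X n s) atTop (𝓝 0)) :
    (∑' n : ℕ, ENNReal.ofReal (X (n + 1) t ^ 2))
        + (∫⁻ s in Ioc 0 t, ∑' n : ℕ, ENNReal.ofReal (dissipationRate β g X (n + 1) s))
      = ∑' n : ℕ, ENNReal.ofReal (x (n + 1) ^ 2) := by
  have hdiss_nonneg (n : ℕ) (s : ℝ) : 0 ≤ dissipationRate β g X (n + 1) s :=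
    dissipationRate_nonneg (hg (n + 1) n.succ_pos) s
  have hintegral_nonneg (n : ℕ) : 0 ≤ ∫ s in (0 : ℝ)..t, dissipationRate β g X (n + 1) s :=
    intervalIntegral.integral_nonneg ht fun s _ => hdiss_nonneg n s
  have hdiss (n : ℕ) := h.intervalIntegrable_dissipationRate (n + 1) ht
  have hno_inflow : ∫ s in (0 : ℝ)..t, energyFlux β φ X 0 s = 0 := by
    simp only [energyFlux, h.1, ne_eq, OfNat.ofNat_ne_zero, not_false_eq_true, zero_pow, mul_zero,
      zero_mul, intervalIntegral.integral_zero]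
  calc _ = ∑' n : ℕ, ENNReal.ofReal
          (X (n + 1) t ^ 2 + ∫ s in (0 : ℝ)..t, dissipationRate β g X (n + 1) s) := by
        rw [lintegral_tsum fun n => (hdiss n).1.aestronglyMeasurable.aemeasurable.ennreal_ofReal,
          ← ENNReal.tsum_add]
        refine tsum_congr fun n => ?_
        rw [← ofReal_intervalIntegral_eq_lintegral_ofReal ht (hdiss n)
          (ae_of_all _ (hdiss_nonneg n)), ENNReal.ofReal_add (sq_nonneg _) (hintegral_nonneg n)]
    _ = ∑' n : ℕ, ENNReal.ofReal (x (n + 1) ^ 2) :=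
        tsum_ofReal_eq_of_eq_add_sub_succ
          (fun n => add_nonneg (sq_nonneg _) (hintegral_nonneg n)) (fun _ => sq_nonneg _)
          (by rwa [hno_inflow]) fun n => h.sq_add_integral_dissipationRate n ht

end IsDyadicSolution

end Dyadic

theorem dyadic_energy_equality_general
    (β : ℝ) (φ g : ℕ → ℝ)
    (hφ : ∃ Φ : ℝ, ∀ n : ℕ, |φ n| ≤ Φ)
    (hgpos : ∀ n : ℕ, 1 ≤ n → 0 < g n)
    (T : ℝ) (x : ℕ → ℝ) (X : ℕ → ℝ → ℝ) (hsol : IsDyadicSolution β φ g x X)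
    (hL3 : MemL3W β X T) :
    ∀ t ∈ Set.Icc (0 : ℝ) T,
      (∑' n : ℕ, ENNReal.ofReal ((X (n + 1) t) ^ 2))
          + (∫⁻ s in Set.Ioc (0 : ℝ) t,
              ∑' n : ℕ, ENNReal.ofReal (2 * kk β (n + 1) / g (n + 1) * (X (n + 1) s) ^ 2))
        = ∑' n : ℕ, ENNReal.ofReal ((x (n + 1)) ^ 2) := by
  intro t ht
  have hflux := hL3.tendsto_integral_energyFlux (fun n => hsol.aemeasurable_Ioc n T) hφ ht
  exact hsol.energy_equality_of_tendsto_integral_energyFlux hgpos ht.1 hflux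

/-- Proposition 2.3: a weak solution of class `L³([0,T]; W^{β/3,3})` satisfies the
energy equality on `[0,T]`. -/
theorem dyadic_energy_equality
    (β : ℝ) (hβ : 0 < β) (φ g : ℕ → ℝ)
    (hφ : ∃ Φ : ℝ, ∀ n : ℕ, |φ n| ≤ Φ)
    (hgpos : ∀ n : ℕ, 1 ≤ n → 0 < g n)
    (T : ℝ) (hT : 0 < T)
    (x : ℕ → ℝ) (hxH : Summable fun n : ℕ => (x (n + 1)) ^ 2)
    (X : ℕ → ℝ → ℝ) (hsol : IsDyadicSolution β φ g x X)
    (hL3 : MemL3W β X T) :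
    ∀ t ∈ Set.Icc (0 : ℝ) T,
      (∑' n : ℕ, ENNReal.ofReal ((X (n + 1) t) ^ 2))
          + (∫⁻ s in Set.Ioc (0 : ℝ) t,
              ∑' n : ℕ, ENNReal.ofReal (2 * kk β (n + 1) / g (n + 1) * (X (n + 1) s) ^ 2))
        = ∑' n : ℕ, ENNReal.ofReal ((x (n + 1)) ^ 2) := by
  exact dyadic_energy_equality_general β φ g hφ hgpos T x X hsol hL3
end

section
/- Suppose g is non-decreasing and ∑_{n≥1} g_n^{-1} = ∞. Let x ∈ H^s for some s>0 and let y be the bounding sequence for x. For n≥1 set h_n = ∑_{j≥n} ∑_{i≥j} x_i². Then for all n≥1 and m≥0, y_{n+2m} ≤ y_n · ∏_{i=1}^{m} C_{n+2i}(y_{n+2i-1}^{1/2}) + h_n. Moreover y_n → 0 as n → ∞. -/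
open scoped BigOperators ENNReal
open MeasureTheory Filter Set Topology

/-- `x ∈ Hˢ`, i.e. `∑_{n≥1} 2^{2sn} xₙ² < ∞`. -/
def MemHs (s : ℝ) (x : ℕ → ℝ) : Prop :=
  Summable (fun n : ℕ => (2 : ℝ) ^ (2 * s * ((n : ℝ) + 1)) * (x (n + 1)) ^ 2)

/-- `‖φ‖_{ℓ^∞} = sup_{n≥1} |φₙ|`. -/
noncomputable def phiNorm (φ : ℕ → ℝ) : ℝ := ⨆ n : ℕ, |φ (n + 1)|

/-- For `gₙ, Φ, v > 0` this is exactly `Cₙ(v) = (1 + 1/((1/2) gₙ Φ v))⁻¹`. -/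
noncomputable def Cfun (Φ : ℝ) (g : ℕ → ℝ) (n : ℕ) (v : ℝ) : ℝ :=
  (g n * Φ * v / 2) / (1 + g n * Φ * v / 2)

/-- `∑_{i ≥ n} xᵢ²`. -/
noncomputable def tail2 (x : ℕ → ℝ) (n : ℕ) : ℝ := ∑' i : ℕ, (x (n + i)) ^ 2

/-- The bounding sequence for `x`: `y₁ = y₂ = 2‖x‖_H²` and
`y_{n+2} = C_{n+2}(√y_{n+1}) yₙ + ∑_{i ≥ n+2} xᵢ²`. -/
noncomputable def boundSeq (Φ : ℝ) (g x : ℕ → ℝ) : ℕ → ℝ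
  | 0 => 0
  | 1 => 2 * tail2 x 1
  | 2 => 2 * tail2 x 1
  | n + 3 =>
      Cfun Φ g (n + 3) (Real.sqrt (boundSeq Φ g x (n + 2))) * boundSeq Φ g x (n + 1)
        + tail2 x (n + 3)

/-!
With `c_k = C_{n+2k+2}(√y_{n+2k+1}) ∈ [0, 1)` and `t_k = ∑_{i ≥ n+2k+2} xᵢ²`, the subsequence
`u_k = y_{n+2k}` satisfies `u_{k+1} = c_k u_k + t_k`. Unrolling this recursion and bounding the
products in front of the `t_k` by `1` gives the first claim; the sum of all tails is finite as soon
as `∑ n xₙ² < ∞`, because `xₙ²` occurs in `n` of the tails.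

In particular `y` is bounded along each parity, say `√y_{n+2k+1} ≤ V`. As `C_n` is increasing,
`1 - c_k ≥ (1 + g_{n+2k+2} ‖φ‖ V / 2)⁻¹`, and the sum of these over `k` diverges together with
`∑ g_{n+2k}⁻¹`. A nonnegative sequence with `u_{k+1} ≤ (1 - γ_k) u_k + t_k`, `∑ t_k < ∞` and
`∑ γ_k = ∞` tends to `0`: it converges and `∑ γ_k u_k < ∞`, so its limit cannot be positive.
-/

section Recursions

variable {u t : ℕ → ℝ}

theorem le_mul_prod_add_sum_of_le_mul_add {c : ℕ → ℝ} (hc₀ : ∀ k, 0 ≤ c k) (hc₁ : ∀ k, c k ≤ 1)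
    (ht : ∀ k, 0 ≤ t k) (h : ∀ k, u (k + 1) ≤ c k * u k + t k) (m : ℕ) :
    u m ≤ u 0 * ∏ k ∈ Finset.range m, c k + ∑ k ∈ Finset.range m, t k := by
  simp only [Finset.range_eq_Ico]
  refine (discrete_gronwall_prod_general (fun k _ ↦ h k) (fun k _ ↦ hc₀ k) m.zero_le).trans ?_
  gcongr with k
  exact mul_le_of_le_one_right (ht k) (Finset.prod_le_one (fun i _ ↦ hc₀ i) fun i _ ↦ hc₁ i)

theorem exists_tendsto_of_le_add (hu : BddBelow (range u)) (ht : Summable t)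
    (h : ∀ k, u (k + 1) ≤ u k + t k) : ∃ L, Tendsto u atTop (𝓝 L) := by
  have hpartial := ht.hasSum.tendsto_sum_nat
  have hanti : Antitone fun k ↦ u k - ∑ i ∈ Finset.range k, t i :=
    antitone_nat_of_succ_le fun k ↦ by
      rw [Finset.sum_range_succ]
      linarith [h k]
  have hbdd : BddBelow (range fun k ↦ u k - ∑ i ∈ Finset.range k, t i) := by
    obtain ⟨b, hb⟩ := hu
    obtain ⟨B, hB⟩ := hpartial.bddAbove_range
    exact ⟨b - B, forall_mem_range.2 fun k ↦
      sub_le_sub (hb (mem_range_self k)) (hB (mem_range_self k))⟩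
  have hlim := (tendsto_atTop_ciInf hanti hbdd).add hpartial
  simp only [sub_add_cancel] at hlim
  exact ⟨_, hlim⟩

theorem summable_of_add_le_add {v : ℕ → ℝ} (hu : BddBelow (range u)) (hv : ∀ k, 0 ≤ v k)
    (ht : Summable t) (h : ∀ k, u (k + 1) + v k ≤ u k + t k) : Summable v := by
  obtain ⟨b, hb⟩ := hu
  obtain ⟨B, hB⟩ := ht.hasSum.tendsto_sum_nat.bddAbove_range
  refine summable_of_sum_range_le (c := u 0 - b + B) hv fun n ↦ ?_
  calc ∑ k ∈ Finset.range n, v k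
      ≤ ∑ k ∈ Finset.range n, (u k - u (k + 1) + t k) :=
        Finset.sum_le_sum fun k _ ↦ by linarith [h k]
    _ = u 0 - u n + ∑ k ∈ Finset.range n, t k := by
        rw [Finset.sum_add_distrib, Finset.sum_range_sub']
    _ ≤ u 0 - b + B :=
        add_le_add (sub_le_sub_left (hb (mem_range_self n)) _) (hB (mem_range_self n))

theorem tendsto_zero_of_le_one_sub_mul_add {γ : ℕ → ℝ} (hu : ∀ k, 0 ≤ u k) (hγ : ∀ k, 0 ≤ γ k)
    (hγdiv : ¬ Summable γ) (ht : Summable t) (h : ∀ k, u (k + 1) ≤ (1 - γ k) * u k + t k) :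
    Tendsto u atTop (𝓝 0) := by
  have hbdd : BddBelow (range u) := ⟨0, forall_mem_range.2 hu⟩
  have hγu (k : ℕ) : 0 ≤ γ k * u k := mul_nonneg (hγ k) (hu k)
  obtain ⟨L, hL⟩ := exists_tendsto_of_le_add hbdd ht fun k ↦ by linarith [h k, hγu k]
  have hsum : Summable fun k ↦ γ k * u k :=
    summable_of_add_le_add hbdd hγu ht fun k ↦ by linarith [h k]
  obtain rfl | hpos := (ge_of_tendsto' hL hu).eq_or_lt
  · exact hL
  refine absurd (.of_norm_bounded_eventually_nat (hsum.mul_left (2 / L)) ?_) hγdiv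
  filter_upwards [hL.eventually_const_lt (half_lt_self hpos)] with k hk
  calc ‖γ k‖ = 2 / L * (γ k * (L / 2)) := by
        rw [Real.norm_of_nonneg (hγ k)]
        field_simp
    _ ≤ 2 / L * (γ k * u k) := by
        gcongr
        exact hγ k

end Recursions

section Series

variable {f : ℕ → ℝ}

theorem not_summable_inv_one_add_mul {a : ℝ} (ha : 0 ≤ a) (hf : ∀ k, 0 ≤ f k)
    (hdiv : ¬ Summable fun k ↦ (f k)⁻¹) : ¬ Summable fun k ↦ (1 + a * f k)⁻¹ := by
  refine fun hsum ↦ hdiv (.of_norm_bounded_eventually_nat (hsum.mul_left (2 * a)) ?_)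
  filter_upwards [hsum.tendsto_atTop_zero.eventually_lt_const one_half_pos] with k hk
  have hden : 0 < 1 + a * f k := by linarith [mul_nonneg ha (hf k)]
  have hlarge : 1 < a * f k := by
    rw [one_div, inv_lt_inv₀ hden two_pos] at hk
    linarith
  have hfk : 0 < f k := pos_of_mul_pos_right (one_pos.trans hlarge) ha
  rw [norm_inv, Real.norm_of_nonneg hfk.le, inv_le_iff_one_le_mul₀ hfk, mul_right_comm,
    ← div_eq_mul_inv, one_le_div hden]
  linarith

theorem summable_mul_add_iff_of_antitone (hf : Antitone f) (m r : ℕ) [NeZero m] :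
    Summable (fun k ↦ f (m * k + r)) ↔ Summable f := by
  rw [← summable_indicator_mod_iff_summable, summable_indicator_mod_iff hf]

theorem not_summable_inv_mul_add (hpos : ∀ n, 1 ≤ n → 0 < f n)
    (hmono : ∀ n m, 1 ≤ n → n ≤ m → f n ≤ f m) (hdiv : ¬ Summable fun n ↦ (f (n + 1))⁻¹)
    (m r : ℕ) [NeZero m] : ¬ Summable fun k ↦ (f (m * k + r))⁻¹ := by
  have hanti : Antitone fun n ↦ (f (n + 1))⁻¹ := fun a b hab ↦
    inv_anti₀ (hpos _ a.succ_pos) (hmono _ _ a.succ_pos (Nat.succ_le_succ hab))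
  refine fun hsum ↦ hdiv ((summable_mul_add_iff_of_antitone hanti m (m - 1 + r)).1
    (((summable_nat_add_iff 1).2 hsum).congr fun k ↦ ?_))
  have hindex : m * (k + 1) + r = m * k + (m - 1 + r) + 1 := by
    have := Nat.pos_of_neZero m
    lia
  rw [hindex]

theorem summable_tsum_add_of_summable_succ_mul (hf : ∀ n, 0 ≤ f n)
    (h : Summable fun n : ℕ ↦ ((n : ℝ) + 1) * f n) : Summable fun j ↦ ∑' i, f (j + i) := by
  have hprod : Summable fun p : ℕ × ℕ ↦ f (p.1 + p.2) := by
    refine Finset.HasAntidiagonal.sigmaAntidiagonalEquivProd.summable_iff.1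
      ((summable_sigma_of_nonneg fun _ ↦ hf _).2 ⟨fun n ↦ .of_finite, h.congr fun n ↦ ?_⟩)
    have hdiag (p : Finset.HasAntidiagonal.antidiagonal n) : f (p.1.1 + p.1.2) = f n :=
      congrArg f (Finset.HasAntidiagonal.mem_antidiagonal.1 p.2)
    simp [hdiag]
  exact hprod.prod

end Series

theorem tendsto_atTop_of_even_of_odd {α : Type*} {l : Filter α} {u : ℕ → α}
    (heven : Tendsto (fun k ↦ u (2 * k)) atTop l)
    (hodd : Tendsto (fun k ↦ u (2 * k + 1)) atTop l) : Tendsto u atTop l := by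
  refine fun s hs ↦ ?_
  obtain ⟨N, hN⟩ := mem_atTop_sets.1 (heven hs)
  obtain ⟨M, hM⟩ := mem_atTop_sets.1 (hodd hs)
  refine mem_atTop_sets.2 ⟨2 * N + 2 * M, fun n hn ↦ ?_⟩
  obtain ⟨k, rfl | rfl⟩ := n.even_or_odd'
  · exact hN k (by lia)
  · exact hM k (by lia)

theorem summable_nat_mul_sq_of_memHs {s : ℝ} (hs : 0 < s) {x : ℕ → ℝ} (hx : MemHs s x) :
    Summable fun n : ℕ ↦ (n : ℝ) * x n ^ 2 := by
  set c := 2 * s * Real.log 2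
  have hc : 0 < c := by positivity
  have hweight (n : ℕ) : (n : ℝ) + 1 ≤ c⁻¹ * 2 ^ (2 * s * ((n : ℝ) + 1)) := by
    rw [le_inv_mul_iff₀ hc, Real.rpow_def_of_pos two_pos]
    calc c * ((n : ℝ) + 1) ≤ c * (n + 1) + 1 := by linarith
      _ ≤ Real.exp (c * (n + 1)) := Real.add_one_le_exp _
      _ = Real.exp (Real.log 2 * (2 * s * (n + 1))) := by rw [← mul_assoc, mul_comm (Real.log 2)]
  refine (summable_nat_add_iff 1).1 (.of_nonneg_of_le (fun n ↦ by positivity) (fun n ↦ ?_)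
    (hx.mul_left c⁻¹))
  rw [← mul_assoc, Nat.cast_succ]
  exact mul_le_mul_of_nonneg_right (hweight n) (sq_nonneg _)

theorem tail2_nonneg (x : ℕ → ℝ) (n : ℕ) : 0 ≤ tail2 x n :=
  tsum_nonneg fun _ ↦ sq_nonneg _

theorem summable_tail2_add {x : ℕ → ℝ} (hx : Summable fun n : ℕ ↦ (n : ℝ) * x n ^ 2) {n : ℕ}
    (hn : 1 ≤ n) : Summable fun j ↦ tail2 x (n + j) := by
  have hshift : Summable fun i : ℕ ↦ ((i : ℝ) + 1) * x (n + i) ^ 2 := by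
    refine .of_nonneg_of_le (fun i ↦ by positivity) (fun i ↦ ?_) ((summable_nat_add_iff n).2 hx)
    rw [add_comm n i, Nat.cast_add]
    gcongr
    exact_mod_cast hn
  simpa only [tail2, add_assoc] using
    summable_tsum_add_of_summable_succ_mul (fun i ↦ sq_nonneg (x (n + i))) hshift

section Cfun

variable {Φ v : ℝ} {g : ℕ → ℝ} {n : ℕ}

theorem Cfun_eq_one_sub_inv (hΦ : 0 ≤ Φ) (hg : 0 ≤ g n) (hv : 0 ≤ v) :
    Cfun Φ g n v = 1 - (1 + Φ * v / 2 * g n)⁻¹ := by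
  have hden : 1 + g n * Φ * v / 2 ≠ 0 := by positivity
  rw [show Φ * v / 2 * g n = g n * Φ * v / 2 by ring, Cfun, div_eq_iff hden, sub_mul,
    inv_mul_cancel₀ hden]
  ring

theorem Cfun_nonneg (hΦ : 0 ≤ Φ) (hg : 0 ≤ g n) (hv : 0 ≤ v) : 0 ≤ Cfun Φ g n v := by
  unfold Cfun
  positivity

theorem Cfun_le_one (hΦ : 0 ≤ Φ) (hg : 0 ≤ g n) (hv : 0 ≤ v) : Cfun Φ g n v ≤ 1 := by
  rw [Cfun_eq_one_sub_inv hΦ hg hv, sub_le_self_iff]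
  positivity

theorem Cfun_le_Cfun {w : ℝ} (hΦ : 0 ≤ Φ) (hg : 0 ≤ g n) (hv : 0 ≤ v) (hvw : v ≤ w) :
    Cfun Φ g n v ≤ Cfun Φ g n w := by
  rw [Cfun_eq_one_sub_inv hΦ hg hv, Cfun_eq_one_sub_inv hΦ hg (hv.trans hvw)]
  gcongr

end Cfun

section BoundSeq

variable {Φ : ℝ} {g x : ℕ → ℝ} {n : ℕ}

theorem boundSeq_add_two (Φ : ℝ) (g x : ℕ → ℝ) (hn : 1 ≤ n) :
    boundSeq Φ g x (n + 2) =
      Cfun Φ g (n + 2) √(boundSeq Φ g x (n + 1)) * boundSeq Φ g x n + tail2 x (n + 2) := by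
  obtain ⟨k, rfl⟩ := Nat.exists_eq_add_of_le' hn
  rw [boundSeq]

theorem boundSeq_nonneg (hΦ : 0 ≤ Φ) (hg : ∀ n, 1 ≤ n → 0 ≤ g n) (x : ℕ → ℝ) (n : ℕ) :
    0 ≤ boundSeq Φ g x n := by
  induction n using boundSeq.induct with
  | case1 => rw [boundSeq]
  | case2 | case3 => exact mul_nonneg two_pos.le (tail2_nonneg x 1)
  | case4 n _ ih =>
    rw [boundSeq]
    exact add_nonneg (mul_nonneg (Cfun_nonneg hΦ (hg _ (by lia)) (Real.sqrt_nonneg _)) ih)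
      (tail2_nonneg x _)

theorem boundSeq_add_two_mul_le (hΦ : 0 ≤ Φ) (hg : ∀ n, 1 ≤ n → 0 ≤ g n)
    (hx : Summable fun n : ℕ ↦ (n : ℝ) * x n ^ 2) (hn : 1 ≤ n) (m : ℕ) :
    boundSeq Φ g x (n + 2 * m) ≤
      boundSeq Φ g x n *
          ∏ i ∈ Finset.Icc 1 m, Cfun Φ g (n + 2 * i) √(boundSeq Φ g x (n + 2 * i - 1)) +
        ∑' j, tail2 x (n + j) := by
  have hunrolled := le_mul_prod_add_sum_of_le_mul_add (u := fun k ↦ boundSeq Φ g x (n + 2 * k))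
    (c := fun k ↦ Cfun Φ g (n + 2 * k + 2) √(boundSeq Φ g x (n + 2 * k + 1)))
    (t := fun k ↦ tail2 x (n + (2 * k + 2)))
    (fun k ↦ Cfun_nonneg hΦ (hg _ (by lia)) (Real.sqrt_nonneg _))
    (fun k ↦ Cfun_le_one hΦ (hg _ (by lia)) (Real.sqrt_nonneg _))
    (fun k ↦ tail2_nonneg x _) (fun k ↦ (boundSeq_add_two Φ g x (by lia)).le) m
  have hprod : ∏ i ∈ Finset.Icc 1 m, Cfun Φ g (n + 2 * i) √(boundSeq Φ g x (n + 2 * i - 1)) =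
      ∏ k ∈ Finset.range m, Cfun Φ g (n + 2 * k + 2) √(boundSeq Φ g x (n + 2 * k + 1)) := by
    rw [Finset.range_eq_Ico, ← Finset.Ico_add_one_right_eq_Icc]
    exact (Finset.prod_Ico_add'
      (fun i ↦ Cfun Φ g (n + 2 * i) √(boundSeq Φ g x (n + 2 * i - 1))) 0 m 1).symm
  have htails : ∑ k ∈ Finset.range m, tail2 x (n + (2 * k + 2)) ≤ ∑' j, tail2 x (n + j) := by
    have hinj : Function.Injective fun k : ℕ ↦ 2 * k + 2 := fun a b hab ↦ by lia
    have hsum := summable_tail2_add hx hn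
    exact ((hsum.comp_injective hinj).sum_le_tsum _ fun k _ ↦ tail2_nonneg x _).trans
      (tsum_comp_le_tsum_of_inj hsum (fun j ↦ tail2_nonneg x _) hinj)
  rw [hprod]
  exact hunrolled.trans (add_le_add_right htails _)

theorem bddAbove_range_boundSeq_add_two_mul (hΦ : 0 ≤ Φ) (hg : ∀ n, 1 ≤ n → 0 ≤ g n)
    (hx : Summable fun n : ℕ ↦ (n : ℝ) * x n ^ 2) (hn : 1 ≤ n) :
    BddAbove (range fun k ↦ boundSeq Φ g x (n + 2 * k)) := by
  refine ⟨boundSeq Φ g x n + ∑' j, tail2 x (n + j), forall_mem_range.2 fun k ↦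
    (boundSeq_add_two_mul_le hΦ hg hx hn k).trans (add_le_add_left ?_ _)⟩
  exact mul_le_of_le_one_right (boundSeq_nonneg hΦ hg x n) (Finset.prod_le_one
    (fun i _ ↦ Cfun_nonneg hΦ (hg _ (by lia)) (Real.sqrt_nonneg _))
    fun i _ ↦ Cfun_le_one hΦ (hg _ (by lia)) (Real.sqrt_nonneg _))

theorem tendsto_boundSeq_add_two_mul (hΦ : 0 ≤ Φ) (hg : ∀ n, 1 ≤ n → 0 ≤ g n)
    (hx : Summable fun n : ℕ ↦ (n : ℝ) * x n ^ 2) (hn : 1 ≤ n)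
    (hdiv : ¬ Summable fun k ↦ (g (n + 2 * k))⁻¹) :
    Tendsto (fun k ↦ boundSeq Φ g x (n + 2 * k)) atTop (𝓝 0) := by
  obtain ⟨B, hB⟩ := bddAbove_range_boundSeq_add_two_mul hΦ hg hx (n := n + 1) (by lia)
  have hsqrt (k : ℕ) : √(boundSeq Φ g x (n + 2 * k + 1)) ≤ √B :=
    Real.sqrt_le_sqrt (by simpa only [add_right_comm] using hB (mem_range_self k))
  have hcontract (k : ℕ) : Cfun Φ g (n + 2 * k + 2) √(boundSeq Φ g x (n + 2 * k + 1)) ≤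
      1 - (1 + Φ * √B / 2 * g (n + 2 * k + 2))⁻¹ :=
    (Cfun_le_Cfun hΦ (hg _ (by lia)) (Real.sqrt_nonneg _) (hsqrt k)).trans_eq
      (Cfun_eq_one_sub_inv hΦ (hg _ (by lia)) (Real.sqrt_nonneg _))
  have hgap : ¬ Summable fun k ↦ (1 + Φ * √B / 2 * g (n + 2 * k + 2))⁻¹ :=
    not_summable_inv_one_add_mul (by positivity) (fun k ↦ hg _ (by lia))
      ((summable_nat_add_iff 1).not.2 hdiv)
  have htails : Summable fun k ↦ tail2 x (n + (2 * k + 2)) :=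
    (summable_tail2_add hx hn).comp_injective (i := fun k : ℕ ↦ 2 * k + 2) fun a b hab ↦ by lia
  refine tendsto_zero_of_le_one_sub_mul_add (fun k ↦ boundSeq_nonneg hΦ hg x _) (fun k ↦ ?_)
    hgap htails fun k ↦ ?_
  · have := hg (n + 2 * k + 2) (by lia)
    positivity
  · exact (boundSeq_add_two Φ g x (by lia)).trans_le (add_le_add_left
      (mul_le_mul_of_nonneg_right (hcontract k) (boundSeq_nonneg hΦ hg x _)) _)

theorem tendsto_boundSeq (hΦ : 0 ≤ Φ) (hg : ∀ n, 1 ≤ n → 0 ≤ g n)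
    (hx : Summable fun n : ℕ ↦ (n : ℝ) * x n ^ 2) (heven : ¬ Summable fun k ↦ (g (2 * k))⁻¹)
    (hodd : ¬ Summable fun k ↦ (g (2 * k + 1))⁻¹) : Tendsto (boundSeq Φ g x) atTop (𝓝 0) := by
  refine tendsto_atTop_of_even_of_odd ?_ ?_
  · rw [← tendsto_add_atTop_iff_nat 1]
    rw [← summable_nat_add_iff 1] at heven
    simp only [mul_add_one, add_comm _ 2] at heven ⊢
    exact tendsto_boundSeq_add_two_mul hΦ hg hx one_le_two heven
  · simp only [add_comm _ 1] at hodd ⊢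
    exact tendsto_boundSeq_add_two_mul hΦ hg hx le_rfl hodd

end BoundSeq

theorem boundSeq_product_bound_and_tendsto_zero_general
    {Φ : ℝ} (hΦ : 0 ≤ Φ) {g x : ℕ → ℝ} (hgpos : ∀ n, 1 ≤ n → 0 < g n)
    (heven : ¬ Summable fun k ↦ (g (2 * k))⁻¹) (hodd : ¬ Summable fun k ↦ (g (2 * k + 1))⁻¹)
    (hx : Summable fun n : ℕ ↦ (n : ℝ) * x n ^ 2) :
    (∀ n m : ℕ, 1 ≤ n →
      boundSeq Φ g x (n + 2 * m) ≤
        boundSeq Φ g x n *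
            ∏ i ∈ Finset.Icc 1 m, Cfun Φ g (n + 2 * i) √(boundSeq Φ g x (n + 2 * i - 1)) +
          ∑' j : ℕ, ∑' i : ℕ, x (n + j + i) ^ 2) ∧
    Tendsto (boundSeq Φ g x) atTop (𝓝 0) :=
  have hg n hn := (hgpos n hn).le
  ⟨fun _ m hn ↦ boundSeq_add_two_mul_le hΦ hg hx hn m, tendsto_boundSeq hΦ hg hx heven hodd⟩

/-- Lemma 3.4: `y_{n+2m} ≤ yₙ ∏_{i=1}^m C_{n+2i}(√y_{n+2i-1}) + hₙ` where
`hₙ = ∑_{j≥n} ∑_{i≥j} xᵢ²`, and `yₙ → 0`. -/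
theorem boundSeq_product_bound_and_tendsto_zero
    (β : ℝ) (hβ : 0 < β) (φ g : ℕ → ℝ)
    (hφbdd : BddAbove (Set.range fun n : ℕ => |φ (n + 1)|))
    (hgpos : ∀ n : ℕ, 1 ≤ n → 0 < g n)
    (hgmono : ∀ n m : ℕ, 1 ≤ n → n ≤ m → g n ≤ g m)
    (hgdiv : ¬ Summable fun n : ℕ => (g (n + 1))⁻¹)
    (s : ℝ) (hs : 0 < s) (x : ℕ → ℝ) (hx : MemHs s x) :
    (∀ n m : ℕ, 1 ≤ n →
      boundSeq (phiNorm φ) g x (n + 2 * m)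
        ≤ boundSeq (phiNorm φ) g x n
            * (∏ i ∈ Finset.Icc 1 m,
                Cfun (phiNorm φ) g (n + 2 * i)
                  (Real.sqrt (boundSeq (phiNorm φ) g x (n + 2 * i - 1))))
          + ∑' j : ℕ, ∑' i : ℕ, (x (n + j + i)) ^ 2) ∧
    Filter.Tendsto (fun n : ℕ => boundSeq (phiNorm φ) g x n) Filter.atTop (nhds 0) :=
  have hdiv := not_summable_inv_mul_add hgpos hgmono hgdiv
  boundSeq_product_bound_and_tendsto_zero_general (Real.iSup_nonneg fun _ ↦ abs_nonneg _)
    hgpos (hdiv 2 0) (hdiv 2 1) (summable_nat_mul_sq_of_memHs hs hx)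
end

section
/- Suppose g=(g_n)_{n≥1} is a positive non-decreasing sequence with ∑_{n≥1} g_n^{-1} = ∞. Let n_0 ≥ 1 be an integer and θ > 0, s > 0 reals, and define recursively n_{k+1} = inf{ n ≥ n_k+2 : ∑_{j=n_k+2}^{n} g_j^{-1} ≥ 2^{-sk} θ } (each n_{k+1} is finite). Then there exist infinitely many k ≥ 1 such that n_{k+1} = n_k + 2. -/
open scoped BigOperators ENNReal
open MeasureTheory Filter Set Topology

/-! If `n_{k+1} ≠ n_k + 2`, the block from `n_k + 2` to `n_{k+1} - 1` is nonempty and, by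
minimality of `n_{k+1}`, the reciprocals `1 / g_j` over it sum to less than the `k`-th threshold
`τ_k`. Its first term dominates each of the two terms skipped before the next block, so the sum
of `1 / g_j` over `n_k + 2 ≤ j < n_{k+1} + 2` is at most `3 τ_k`. The thresholds are summable, so
this happening for all large `k` would make `∑ 1 / g_j` converge. -/

lemma summable_of_sum_Ico_le {a b : ℕ → ℝ} {f : ℕ → ℕ} (hf : StrictMono f)
    (ha : ∀ j ≥ f 0, 0 ≤ a j) (hab : ∀ k, ∑ j ∈ Finset.Ico (f k) (f (k + 1)), a j ≤ b k)
    (hb : Summable b) : Summable a := by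
  have hIco_nonneg : ∀ k, 0 ≤ ∑ j ∈ Finset.Ico (f k) (f (k + 1)), a j := fun k ↦
    Finset.sum_nonneg fun j hj ↦
      ha j ((hf.monotone k.zero_le).trans (Finset.mem_Ico.mp hj).1)
  have htelescope : ∀ N, ∑ j ∈ Finset.Ico (f 0) (f N), a j =
      ∑ k ∈ Finset.range N, ∑ j ∈ Finset.Ico (f k) (f (k + 1)), a j := by
    intro N
    induction N with
    | zero => simp
    | succ N ih =>
      rw [Finset.sum_range_succ, ← ih,
        Finset.sum_Ico_consecutive a (hf.monotone N.zero_le) (hf.monotone N.le_succ)]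
  rw [← summable_nat_add_iff (f 0)]
  refine summable_of_sum_range_le (c := ∑' k, b k) (fun j ↦ ha _ (Nat.le_add_left _ _)) fun N ↦ ?_
  calc ∑ j ∈ Finset.range N, a (j + f 0)
      = ∑ j ∈ Finset.Ico (f 0) (f 0 + N), a j := by
        rw [Finset.range_eq_Ico, Finset.sum_Ico_add' a 0 N (f 0), zero_add, add_comm N]
    _ ≤ ∑ j ∈ Finset.Ico (f 0) (f N), a j :=
        Finset.sum_le_sum_of_subset_of_nonneg
          (Finset.Ico_subset_Ico_right (by simpa [add_comm] using hf.add_le_nat N 0))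
          fun j hj _ ↦ ha j (Finset.mem_Ico.mp hj).1
    _ = ∑ k ∈ Finset.range N, ∑ j ∈ Finset.Ico (f k) (f (k + 1)), a j := htelescope N
    _ ≤ ∑ k ∈ Finset.range N, b k := Finset.sum_le_sum fun k _ ↦ hab k
    _ ≤ ∑' k, b k := hb.sum_le_tsum _ fun k _ ↦ (hIco_nonneg k).trans (hab k)

/-- The first index `n ≥ m` at which the sum of `a` from `m` to `n` reaches the threshold `t`; it
is the junk value `0` if the threshold is never reached. -/
noncomputable def firstPassage (a : ℕ → ℝ) (m : ℕ) (t : ℝ) : ℕ :=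
  sInf {n : ℕ | m ≤ n ∧ t ≤ ∑ j ∈ Finset.Icc m n, a j}

section FirstPassage

variable {a : ℕ → ℝ} {m : ℕ} {t : ℝ}

lemma le_firstPassage (ha : ∀ j ≥ m, 0 ≤ a j) (hdiv : ¬ Summable a) : m ≤ firstPassage a m t := by
  have htendsto : Tendsto (fun N ↦ ∑ j ∈ Finset.range N, a (j + m)) atTop atTop :=
    (not_summable_iff_tendsto_nat_atTop_of_nonneg fun j ↦ ha _ (Nat.le_add_left _ _)).mp
      (mt (summable_nat_add_iff m).mp hdiv)
  obtain ⟨N, hN⟩ := ((tendsto_add_atTop_iff_nat 1).mpr htendsto |>.eventually_ge_atTop t).exists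
  have hIcc : ∑ j ∈ Finset.Icc m (N + m), a j = ∑ j ∈ Finset.range (N + 1), a (j + m) := by
    rw [Finset.range_eq_Ico, Finset.sum_Ico_add' a 0 (N + 1) m, zero_add, add_right_comm,
      Finset.Ico_add_one_right_eq_Icc]
  have hne : {n : ℕ | m ≤ n ∧ t ≤ ∑ j ∈ Finset.Icc m n, a j}.Nonempty :=
    ⟨N + m, Nat.le_add_left m N, hN.trans_eq hIcc.symm⟩
  exact (Nat.sInf_mem hne).1

lemma sum_Ico_firstPassage_lt (h : m < firstPassage a m t) :
    ∑ j ∈ Finset.Ico m (firstPassage a m t), a j < t := by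
  have hnotMem : firstPassage a m t - 1 ∉ {n : ℕ | m ≤ n ∧ t ≤ ∑ j ∈ Finset.Icc m n, a j} :=
    Nat.notMem_of_lt_sInf (Nat.sub_one_lt_of_lt h)
  have hIcc : Finset.Icc m (firstPassage a m t - 1) = Finset.Ico m (firstPassage a m t) :=
    Finset.Icc_sub_one_right_eq_Ico_of_not_isMin (by simpa using Nat.ne_zero_of_lt h) m
  refine not_le.mp fun hle ↦ hnotMem ⟨Nat.le_sub_one_of_lt h, ?_⟩
  rwa [hIcc]

lemma sum_Ico_firstPassage_add_le (hanti : AntitoneOn a (Ici m)) (ha : ∀ j ≥ m, 0 ≤ a j)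
    (h : m < firstPassage a m t) (p : ℕ) :
    ∑ j ∈ Finset.Ico m (firstPassage a m t + p), a j ≤ (p + 1) * t := by
  set N := firstPassage a m t
  have hblock : ∑ j ∈ Finset.Ico m N, a j ≤ t := (sum_Ico_firstPassage_lt h).le
  have hfirst : a m ≤ t :=
    (Finset.single_le_sum (fun j hj ↦ ha j (Finset.mem_Ico.mp hj).1)
      (Finset.left_mem_Ico.mpr h)).trans hblock
  have hskipped : ∑ j ∈ Finset.Ico N (N + p), a j ≤ p * t := by
    have hle : ∀ j ∈ Finset.Ico N (N + p), a j ≤ t := fun j hj ↦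
      have hmj : m ≤ j := h.le.trans (Finset.mem_Ico.mp hj).1
      (hanti self_mem_Ici hmj hmj).trans hfirst
    simpa using Finset.sum_le_card_nsmul _ _ _ hle
  rw [← Finset.sum_Ico_consecutive a h.le (Nat.le_add_right N p)]
  linarith

end FirstPassage

section Recursion

variable {a τ : ℕ → ℝ} {p : ℕ} {n : ℕ → ℕ}

lemma le_of_forall_eq_firstPassage (ha : ∀ j ≥ n 0 + p, 0 ≤ a j) (hdiv : ¬ Summable a)
    (hn : ∀ k, n (k + 1) = firstPassage a (n k + p) (τ k)) (k : ℕ) : n 0 ≤ n k := by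
  induction k with
  | zero => rfl
  | succ k ih =>
    calc n 0 ≤ n k + p := ih.trans (Nat.le_add_right _ p)
      _ ≤ firstPassage a (n k + p) (τ k) :=
        le_firstPassage (fun j hj ↦ ha j ((Nat.add_le_add_right ih p).trans hj)) hdiv
      _ = n (k + 1) := (hn k).symm

lemma summable_of_forall_add_lt_firstPassage (hanti : AntitoneOn a (Ici (n 0 + p)))
    (ha : ∀ j ≥ n 0 + p, 0 ≤ a j) (hτ : Summable τ)
    (hn : ∀ k, n (k + 1) = firstPassage a (n k + p) (τ k))
    (hlt : ∀ k, n k + p < n (k + 1)) : Summable a := by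
  have hmono : StrictMono fun k ↦ n k + p :=
    strictMono_nat_of_lt_succ fun k ↦ (hlt k).trans_le (Nat.le_add_right _ p)
  have hstart : ∀ k, n 0 + p ≤ n k + p := fun k ↦ hmono.monotone k.zero_le
  refine summable_of_sum_Ico_le hmono ha (fun k ↦ ?_) (hτ.mul_left (p + 1 : ℝ))
  have hlt_k := hlt k
  rw [hn k] at hlt_k ⊢
  exact sum_Ico_firstPassage_add_le (hanti.mono (Ici_subset_Ici.mpr (hstart k)))
    (fun j hj ↦ ha j ((hstart k).trans hj)) hlt_k p

theorem subsequence_infinitely_many_consecutive_general (hanti : AntitoneOn a (Ici (n 0 + p)))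
    (ha : ∀ j ≥ n 0 + p, 0 ≤ a j) (hdiv : ¬ Summable a) (hτ : Summable τ)
    (hn : ∀ k, n (k + 1) = firstPassage a (n k + p) (τ k)) :
    ∃ᶠ k in atTop, n (k + 1) = n k + p := by
  by_contra hrare
  obtain ⟨K, hK⟩ := eventually_atTop.mp (not_frequently.mp hrare)
  have hstart : ∀ k, n 0 + p ≤ n k + p := fun k ↦
    Nat.add_le_add_right (le_of_forall_eq_firstPassage ha hdiv hn k) p
  have hnonneg : ∀ k, ∀ j ≥ n k + p, 0 ≤ a j := fun k j hj ↦ ha j ((hstart k).trans hj)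
  have hlt : ∀ k ≥ K, n k + p < n (k + 1) := fun k hk ↦
    lt_of_le_of_ne (hn k ▸ le_firstPassage (hnonneg k) hdiv) (Ne.symm (hK k hk))
  refine hdiv (summable_of_forall_add_lt_firstPassage (n := fun k ↦ n (K + k))
    (τ := fun k ↦ τ (K + k)) (hanti.mono (Ici_subset_Ici.mpr (hstart K))) (hnonneg K) ?_
    (fun k ↦ hn (K + k)) fun k ↦ hlt (K + k) (Nat.le_add_right K k))
  exact hτ.comp_injective (add_right_injective K)

end Recursion

lemma summable_rpow_neg_mul_natCast {b s : ℝ} (hb : 1 < b) (hs : 0 < s) :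
    Summable fun k : ℕ ↦ b ^ (-s * (k : ℝ)) := by
  simp only [Real.rpow_mul_natCast (zero_le_one.trans hb.le)]
  exact summable_geometric_of_lt_one (by positivity)
    (Real.rpow_lt_one_of_one_lt_of_neg hb (neg_neg_of_pos hs))

/-- Lemma 3.7: there are infinitely many `k ≥ 1` with `n_{k+1} = n_k + 2`. -/
theorem subsequence_infinitely_many_consecutive
    (g : ℕ → ℝ)
    (hgpos : ∀ n : ℕ, 1 ≤ n → 0 < g n)
    (hgmono : ∀ n m : ℕ, 1 ≤ n → n ≤ m → g n ≤ g m)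
    (hgdiv : ¬ Summable fun n : ℕ => (g (n + 1))⁻¹)
    (n₀ : ℕ) (hn₀ : 1 ≤ n₀) (θ s : ℝ) (hθ : 0 < θ) (hs : 0 < s)
    (nseq : ℕ → ℕ) (h0 : nseq 0 = n₀)
    (hrec : ∀ k : ℕ, nseq (k + 1) = sInf {n : ℕ | nseq k + 2 ≤ n ∧
      (2 : ℝ) ^ (-s * (k : ℝ)) * θ ≤ ∑ j ∈ Finset.Icc (nseq k + 2) n, (g j)⁻¹}) :
    ∀ K : ℕ, ∃ k : ℕ, K ≤ k ∧ 1 ≤ k ∧ nseq (k + 1) = nseq k + 2 := by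
  have hanti : AntitoneOn (fun j ↦ (g j)⁻¹) (Ici (nseq 0 + 2)) := fun i hi j _ hij ↦
    have hi_pos : 1 ≤ i := le_trans (by omega) (mem_Ici.mp hi)
    inv_anti₀ (hgpos i hi_pos) (hgmono i j hi_pos hij)
  have hnonneg : ∀ j ≥ nseq 0 + 2, 0 ≤ (g j)⁻¹ := fun j hj ↦
    (inv_pos.mpr (hgpos j (by omega))).le
  have hdiv : ¬ Summable fun j ↦ (g j)⁻¹ := mt (summable_nat_add_iff 1).mpr hgdiv
  have hfreq := subsequence_infinitely_many_consecutive_general hanti hnonneg hdiv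
    ((summable_rpow_neg_mul_natCast one_lt_two hs).mul_right θ) hrec
  intro K
  obtain ⟨k, hk, hk_eq⟩ := frequently_atTop.mp hfreq (K + 1)
  exact ⟨k, by omega, by omega, hk_eq⟩
end
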